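/- arXiv:2207.13445 — 4 statements merged into one kernel-verified Lean document; each statement's English description precedes it below -/
import Mathlib

section
/- The matrix A is self-adjoint with respect to the form ⟨·,·⟩ (i.e. ⟨Ax,y⟩ = ⟨x,Ay⟩ for all x,y ∈ k⁷, equivalently A = J·Aᵀ·J), and the characteristic polynomial of A over 𝔽₃ is squarefree; consequently A is regular semisimple, i.e. A has 7 distinct eigenvalues in an algebraic closure of 𝔽₃. -/
open Matrix

/-- The 7×7 anti-diagonal identity matrix (Gram matrix of the form
`⟨x,y⟩ = x₁y₇ + ... + x₇y₁`), 0-indexed: `Jmat i j = 1` iff `i + j = 6`. -/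
def Jmat : Matrix (Fin 7) (Fin 7) (ZMod 3) :=
  fun i j => if (i : ℕ) + (j : ℕ) = 6 then 1 else 0

/-- The symmetric bilinear form `⟨x,y⟩ = x₁y₇ + x₂y₆ + ... + x₇y₁` on `k⁷`. -/
def form (x y : Fin 7 → ZMod 3) : ZMod 3 := x ⬝ᵥ Jmat.mulVec y

/-- The matrix `A` from the paper. -/
def A : Matrix (Fin 7) (Fin 7) (ZMod 3) :=
  !![0,0,1,0,0,1,0;
     1,0,0,0,0,0,1;
     0,1,0,0,0,0,0;
     0,0,0,0,0,0,0;
     0,1,0,0,0,0,1;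
     0,0,1,0,1,0,0;
     0,0,0,0,0,1,0]

/-!
The fourth row and column of `A` vanish, and `A` commutes with the permutation exchanging `1 ↔ 5`,
`2 ↔ 6` and `3 ↔ 7`, so up to reordering it is `[[P, Q], [Q, P]] ⊕ 0`, and its characteristic
polynomial is `X` times those of `P + Q` and `P - Q`. In characteristic `3` this product is
`X * (X - 1) ^ 6 - X ^ 3`, whose derivative `(X - 1) ^ 6` vanishes only at `1`, where the polynomial
itself takes the value `-1`; so it is separable.
-/

open Polynomial

section Adjoint

variable {n R : Type*} [Fintype n] [CommRing R] {J M : Matrix n n R}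

theorem dotProduct_mulVec_comm_of_isSelfAdjoint (h : J.IsSelfAdjoint M) (x y : n → R) :
    M *ᵥ x ⬝ᵥ J *ᵥ y = x ⬝ᵥ J *ᵥ M *ᵥ y := by
  have h : Mᵀ * J = J * M := h
  rw [← vecMul_transpose, ← dotProduct_mulVec, mulVec_mulVec, mulVec_mulVec, h]

theorem isSelfAdjoint_iff_eq_mul_transpose_mul [DecidableEq n] (hJ : J * J = 1) :
    J.IsSelfAdjoint M ↔ M = J * Mᵀ * J := by
  change Mᵀ * J = J * M ↔ M = J * Mᵀ * J
  refine ⟨fun h => ?_, fun h => ?_⟩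
  · rw [mul_assoc, h, ← mul_assoc, hJ, one_mul]
  · conv_rhs => rw [h, ← mul_assoc, ← mul_assoc, hJ, one_mul]

end Adjoint

section Charpoly

variable {n R : Type*} [Fintype n] [DecidableEq n] [CommRing R]

theorem charpoly_fromBlocks_swap (P Q : Matrix n n R) :
    (fromBlocks P Q Q P).charpoly = (P + Q).charpoly * (P - Q).charpoly := by
  let U : Matrix (n ⊕ n) (n ⊕ n) R := fromBlocks 1 0 1 1
  let V : Matrix (n ⊕ n) (n ⊕ n) R := fromBlocks 1 0 (-1) 1
  have hUV : U * V = 1 := by simp [U, V, fromBlocks_multiply]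
  have hconj : V * (fromBlocks P Q Q P * U) = fromBlocks (P + Q) Q 0 (P - Q) := by
    simp only [U, V, fromBlocks_multiply, fromBlocks_inj]
    refine ⟨?_, ?_, ?_, ?_⟩ <;> noncomm_ring
  calc (fromBlocks P Q Q P).charpoly
      = (fromBlocks P Q Q P * U * V).charpoly := by rw [mul_assoc, hUV, mul_one]
    _ = (V * (fromBlocks P Q Q P * U)).charpoly := charpoly_mul_comm _ _
    _ = (P + Q).charpoly * (P - Q).charpoly := by rw [hconj, charpoly_fromBlocks_zero₂₁]

theorem charpoly_fin_three (M : Matrix (Fin 3) (Fin 3) R) :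
    M.charpoly = X ^ 3 - C M.trace * X ^ 2 + C M.adjugate.trace * X - C M.det := by
  have trace_adjugate : M.adjugate.trace =
      (M 1 1 * M 2 2 - M 1 2 * M 2 1) + (M 0 0 * M 2 2 - M 0 2 * M 2 0) +
        (M 0 0 * M 1 1 - M 0 1 * M 1 0) := by
    simp [adjugate_fin_three, trace_fin_three]
  rw [trace_adjugate, trace_fin_three, charpoly, det_fin_three, det_fin_three]
  simp only [charmatrix_apply_eq, charmatrix_apply_ne, ne_eq, Fin.reduceEq, not_false_eq_true,
    map_add, map_sub, map_mul]
  ring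

theorem card_aroots_charpoly_of_separable {K L : Type*} [Field K] [Field L] [Algebra K L]
    [IsAlgClosed L] [DecidableEq L] {M : Matrix n n K} (h : M.charpoly.Separable) :
    (M.charpoly.aroots L).toFinset.card = Fintype.card n := by
  rw [← natSepDegree_eq_of_isAlgClosed, h.natSepDegree_eq_natDegree, charpoly_natDegree_eq_dim]

end Charpoly

section Separable

variable {R : Type*} [CommRing R]

theorem isCoprime_X_sub_C_of_isUnit_eval {p : R[X]} {a : R} (h : IsUnit (p.eval a)) :
    IsCoprime p (X - C a) := by
  rw [← modByMonic_add_div p (X - C a), modByMonic_X_sub_C_eq_C_eval]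
  exact IsCoprime.add_mul_left_left (isCoprime_one_left.of_isCoprime_of_dvd_left (h.map C).dvd) _

theorem separable_of_derivative_eq_X_sub_C_pow {p : R[X]} {a : R} {m : ℕ}
    (hp : derivative p = (X - C a) ^ m) (h : IsUnit (p.eval a)) : p.Separable := by
  rw [separable_def, hp]
  exact (isCoprime_X_sub_C_of_isUnit_eval h).pow_right

theorem derivative_X_mul_X_sub_one_pow_six_sub_X_pow_three [CharP R 3] :
    derivative (X * (X - 1) ^ 6 - X ^ 3 : R[X]) = (X - 1) ^ 6 := by
  have three_eq_zero : (3 : R[X]) = 0 := CharP.ofNat_eq_zero R[X] 3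
  simp only [derivative_sub, derivative_mul, derivative_X, derivative_pow, derivative_one,
    map_natCast]
  push_cast
  linear_combination (2 * X * (X - 1) ^ 5 - X ^ 2) * three_eq_zero

theorem separable_X_mul_X_sub_one_pow_six_sub_X_pow_three [CharP R 3] :
    (X * (X - 1) ^ 6 - X ^ 3 : R[X]).Separable := by
  refine separable_of_derivative_eq_X_sub_C_pow (a := 1) (m := 6) ?_ (by simp)
  rw [derivative_X_mul_X_sub_one_pow_six_sub_X_pow_three, map_one]

end Separable

theorem Jmat_mul_self : Jmat * Jmat = 1 := by decide

/-- The ordering `1, 2, 3, 5, 6, 7, 4` of the coordinates (numbered from `1` here, from `0` in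
`Fin 7`), which brings `A` to block form. -/
def blockEquiv : (Fin 3 ⊕ Fin 3) ⊕ Fin 1 ≃ Fin 7 where
  toFun := Sum.elim (Sum.elim ![0, 1, 2] ![4, 5, 6]) ![3]
  invFun := ![.inl (.inl 0), .inl (.inl 1), .inl (.inl 2), .inr 0,
    .inl (.inr 0), .inl (.inr 1), .inl (.inr 2)]
  left_inv := by decide
  right_inv := by decide

/-- The block `P` of `A` on the coordinates `1, 2, 3`, which is also its block on `5, 6, 7`. -/
def diagBlock : Matrix (Fin 3) (Fin 3) (ZMod 3) :=
  !![0, 0, 1;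
     1, 0, 0;
     0, 1, 0]

/-- The block `Q` of `A` coupling the coordinates `1, 2, 3` with `5, 6, 7`, in either direction. -/
def offDiagBlock : Matrix (Fin 3) (Fin 3) (ZMod 3) :=
  !![0, 1, 0;
     0, 0, 1;
     0, 0, 0]

theorem A_eq_reindex_fromBlocks :
    A = reindex blockEquiv blockEquiv
      (fromBlocks (fromBlocks diagBlock offDiagBlock offDiagBlock diagBlock) 0 0 0) := by
  decide

theorem charpoly_diagBlock_add_offDiagBlock :
    (diagBlock + offDiagBlock).charpoly = X ^ 3 + X - 1 := by
  have trace_eq : (diagBlock + offDiagBlock).trace = 0 := by decide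
  have trace_adjugate_eq : (diagBlock + offDiagBlock).adjugate.trace = 1 := by decide
  have det_eq : (diagBlock + offDiagBlock).det = 1 := by decide
  rw [charpoly_fin_three, trace_eq, trace_adjugate_eq, det_eq]
  simp

theorem charpoly_diagBlock_sub_offDiagBlock :
    (diagBlock - offDiagBlock).charpoly = X ^ 3 - X - 1 := by
  have trace_eq : (diagBlock - offDiagBlock).trace = 0 := by decide
  have trace_adjugate_eq : (diagBlock - offDiagBlock).adjugate.trace = -1 := by decide
  have det_eq : (diagBlock - offDiagBlock).det = 1 := by decide
  rw [charpoly_fin_three, trace_eq, trace_adjugate_eq, det_eq]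
  simp [sub_eq_add_neg]

theorem charpoly_A : A.charpoly = X * (X - 1) ^ 6 - X ^ 3 := by
  have frobenius : (X - 1 : (ZMod 3)[X]) ^ 3 = X ^ 3 - 1 := by
    rw [sub_pow_char, one_pow]
  have factorization : A.charpoly = (X ^ 3 + X - 1) * (X ^ 3 - X - 1) * X := by
    rw [A_eq_reindex_fromBlocks, charpoly_reindex, charpoly_fromBlocks_zero₂₁,
      charpoly_fromBlocks_swap, charpoly_diagBlock_add_offDiagBlock,
      charpoly_diagBlock_sub_offDiagBlock, charpoly_zero, Fintype.card_fin, pow_one]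
  calc A.charpoly
      = X * (X ^ 3 - 1) ^ 2 - X ^ 3 := by rw [factorization]; ring
    _ = X * (X - 1) ^ 6 - X ^ 3 := by rw [← frobenius, ← pow_mul]

theorem separable_charpoly_A : A.charpoly.Separable :=
  charpoly_A ▸ separable_X_mul_X_sub_one_pow_six_sub_X_pow_three

theorem isSelfAdjoint_A : Jmat.IsSelfAdjoint A := by
  unfold Matrix.IsSelfAdjoint IsAdjointPair
  decide

/-- `A` is self-adjoint with respect to the form, equivalently `A = J·Aᵀ·J`,
its characteristic polynomial over `𝔽₃` is squarefree, and consequently `A`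
has 7 distinct eigenvalues in an algebraic closure of `𝔽₃`. -/
theorem stmt0 [DecidableEq (AlgebraicClosure (ZMod 3))] :
    (∀ x y : Fin 7 → ZMod 3, form (A.mulVec x) y = form x (A.mulVec y)) ∧
    A = Jmat * Aᵀ * Jmat ∧
    Squarefree (Matrix.charpoly A) ∧
    ((Matrix.charpoly A).map
        (algebraMap (ZMod 3) (AlgebraicClosure (ZMod 3)))).roots.toFinset.card = 7 :=
  ⟨dotProduct_mulVec_comm_of_isSelfAdjoint isSelfAdjoint_A,
    (isSelfAdjoint_iff_eq_mul_transpose_mul Jmat_mul_self).1 isSelfAdjoint_A,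
    separable_charpoly_A.squarefree,
    card_aroots_charpoly_of_separable separable_charpoly_A⟩
end

section
/- Let M be a self-adjoint endomorphism of V whose characteristic polynomial has n distinct roots in K (so M has n distinct eigenvalues in K, with all eigenspaces one-dimensional and eigenvectors spanning V), and let g be an orthogonal endomorphism of V. Then g commutes with M (g ∘ M = M ∘ g) if and only if for every eigenvector v of M one has g v = v or g v = −v. -/
/-!
Self-adjointness makes eigenvectors of `M` with distinct eigenvalues orthogonal, so `B` is diagonal
in an eigenbasis of `M`, and nondegeneracy forces `B v v ≠ 0` for every eigenvector `v`. If `g`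
commutes with `M`, it preserves the line spanned by `v`, say `g v = c • v`, and orthogonality gives
`c² B v v = B v v`, hence `c = ±1`. Conversely, if every eigenvector of `M` is an eigenvector of
`g`, both operators are diagonal in the same basis.
-/

open Module Module.End

section Domain

variable {R E : Type*} [CommRing R] [IsDomain R] [AddCommGroup E] [Module R E]
  {B : LinearMap.BilinForm R E}

theorem apply_eq_zero_of_mem_eigenspace_of_ne {M : End R E} (hM : B.IsSelfAdjoint M) {a b : R}
    (hab : a ≠ b) {x y : E} (hx : x ∈ M.eigenspace a) (hy : y ∈ M.eigenspace b) :
    B x y = 0 := by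
  have h : a * B x y = b * B x y := by
    simpa [mem_eigenspace_iff.1 hx, mem_eigenspace_iff.1 hy] using hM x y
  exact (mul_eq_mul_right_iff.1 h).resolve_left hab

theorem eq_or_eq_neg_of_isOrthogonal_of_eq_smul {g : End R E} (hg : B.IsOrthogonal g) {v : E}
    (hv : B v v ≠ 0) {c : R} (hc : g v = c • v) : g v = v ∨ g v = -v := by
  have h : c * c * B v v = B v v := by simpa [hc, mul_assoc] using hg v v
  rcases mul_self_eq_one_iff.1 ((mul_eq_right₀ hv).1 h) with rfl | rfl
  · left; rw [hc, one_smul]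
  · right; rw [hc, neg_smul, one_smul]

end Domain

theorem commute_of_forall_hasEigenvector_exists_eq_smul {R E : Type*} [CommRing R]
    [AddCommGroup E] [Module R E] {M g : End R E} (hM : ⨆ μ, M.eigenspace μ = ⊤)
    (h : ∀ μ v, M.HasEigenvector μ v → ∃ c : R, g v = c • v) : Commute g M := by
  have hle : ⨆ μ, M.eigenspace μ ≤ LinearMap.eqLocus (g * M) (M * g) := by
    refine iSup_le fun μ v hv ↦ ?_
    rcases eq_or_ne v 0 with rfl | hv0
    · exact zero_mem _
    obtain ⟨c, hc⟩ := h μ v ⟨hv, hv0⟩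
    simp only [LinearMap.mem_eqLocus, mul_apply, mem_eigenspace_iff.1 hv, hc, map_smul,
      smul_comm c μ v]
  exact LinearMap.eqLocus_eq_top.1 (top_le_iff.1 (hM ▸ hle))

section SimpleEigenvalue

variable {K V : Type*} [Field K] [AddCommGroup V] [Module K V] {M : End K V} {μ : K} {v : V}

theorem exists_smul_eq_of_finrank_eigenspace_eq_one (hμ : finrank K (M.eigenspace μ) = 1)
    (hv : M.HasEigenvector μ v) {x : V} (hx : x ∈ M.eigenspace μ) : ∃ c : K, c • v = x := by
  have hv0 : (⟨v, hv.1⟩ : M.eigenspace μ) ≠ 0 := fun h ↦ hv.2 (congrArg Subtype.val h)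
  obtain ⟨c, hc⟩ := (finrank_eq_one_iff_of_nonzero' _ hv0).1 hμ ⟨x, hx⟩
  exact ⟨c, congrArg Subtype.val hc⟩

theorem exists_eq_smul_of_commute_of_finrank_eigenspace_eq_one {g : End K V} (h : Commute g M)
    (hμ : finrank K (M.eigenspace μ) = 1) (hv : M.HasEigenvector μ v) : ∃ c : K, g v = c • v := by
  have hgv : g v ∈ M.eigenspace μ := mapsTo_genEigenspace_of_comm h.symm μ 1 hv.1
  obtain ⟨c, hc⟩ := exists_smul_eq_of_finrank_eigenspace_eq_one hμ hv hgv
  exact ⟨c, hc.symm⟩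

theorem apply_self_ne_zero_of_finrank_eigenspace_eq_one {B : LinearMap.BilinForm K V}
    (hB : B.SeparatingLeft) (hM : B.IsSelfAdjoint M) (hM_top : ⨆ ν, M.eigenspace ν = ⊤)
    (hμ : finrank K (M.eigenspace μ) = 1) (hv : M.HasEigenvector μ v) : B v v ≠ 0 := by
  intro hvv
  have hle : ⨆ ν, M.eigenspace ν ≤ LinearMap.ker (B v) := by
    refine iSup_le fun ν y hy ↦ ?_
    rcases eq_or_ne μ ν with rfl | hμν
    · obtain ⟨c, rfl⟩ := exists_smul_eq_of_finrank_eigenspace_eq_one hμ hv hy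
      exact Submodule.smul_mem _ c hvv
    · exact apply_eq_zero_of_mem_eigenspace_of_ne hM hμν hv.1 hy
  exact hv.2 (hB v fun y ↦ hle (hM_top ▸ Submodule.mem_top))

end SimpleEigenvalue

theorem nodup_roots_of_natDegree_le_card_toFinset {R : Type*} [CommRing R] [IsDomain R]
    [DecidableEq R] {p : Polynomial R} (hp : p.natDegree ≤ p.roots.toFinset.card) :
    p.roots.Nodup :=
  Multiset.toFinset_card_eq_card_iff_nodup.1 <|
    (Multiset.toFinset_card_le _).antisymm (p.card_roots'.trans hp)

section Charpoly

variable {K V : Type*} [Field K] [DecidableEq K] [AddCommGroup V] [Module K V]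
  [FiniteDimensional K V] {M : End K V}

theorem iSup_eigenspace_eq_top_of_card_roots_charpoly_eq_finrank
    (hM : M.charpoly.roots.toFinset.card = finrank K V) : ⨆ μ, M.eigenspace μ = ⊤ := by
  have hroot (μ : M.charpoly.roots.toFinset) : ∃ v, M.HasEigenvector μ v :=
    ((hasEigenvalue_iff_isRoot_charpoly M μ).2
      (Polynomial.isRoot_of_mem_roots (Multiset.mem_toFinset.1 μ.2))).exists_hasEigenvector
  choose e he using hroot
  have hspan : Submodule.span K (Set.range e) = ⊤ :=
    (eigenvectors_linearIndependent' M Subtype.val Subtype.val_injective e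
      he).span_eq_top_of_card_eq_finrank' (by rw [Fintype.card_coe, hM])
  rw [← top_le_iff, ← hspan, Submodule.span_le]
  rintro _ ⟨μ, rfl⟩
  exact Submodule.mem_iSup_of_mem (μ : K) (he μ).1

theorem finrank_eigenspace_eq_one_of_card_roots_charpoly_eq_finrank
    (hM : M.charpoly.roots.toFinset.card = finrank K V) {μ : K} (hμ : M.HasEigenvalue μ) :
    finrank K (M.eigenspace μ) = 1 := by
  have hnodup : M.charpoly.roots.Nodup :=
    nodup_roots_of_natDegree_le_card_toFinset (by rw [hM, LinearMap.charpoly_natDegree])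
  have hle : finrank K (M.eigenspace μ) ≤ 1 :=
    calc finrank K (M.eigenspace μ) ≤ M.charpoly.rootMultiplicity μ :=
          LinearMap.finrank_eigenspace_le M μ
      _ = M.charpoly.roots.count μ := (Polynomial.count_roots _).symm
      _ ≤ 1 := Multiset.nodup_iff_count_le_one.1 hnodup μ
  exact hle.antisymm (Submodule.one_le_finrank_iff.2 hμ)

end Charpoly

theorem stmt2_general {K V : Type*} [Field K] [AddCommGroup V] [Module K V]
    {B : LinearMap.BilinForm K V} (hB : B.SeparatingLeft)
    {M : End K V} (hM : B.IsSelfAdjoint M) (hM_top : ⨆ μ, M.eigenspace μ = ⊤)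
    (hM_simple : ∀ μ, M.HasEigenvalue μ → finrank K (M.eigenspace μ) = 1)
    {g : End K V} (hg : B.IsOrthogonal g) :
    g ∘ₗ M = M ∘ₗ g ↔ ∀ v : V, v ≠ 0 → (∃ μ : K, M v = μ • v) → (g v = v ∨ g v = -v) := by
  constructor
  · rintro hcomm v hv0 ⟨μ, hμ⟩
    have hv : M.HasEigenvector μ v := ⟨mem_eigenspace_iff.2 hμ, hv0⟩
    have hsimple := hM_simple μ (hasEigenvalue_of_hasEigenvector hv)
    obtain ⟨c, hc⟩ := exists_eq_smul_of_commute_of_finrank_eigenspace_eq_one hcomm hsimple hv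
    exact eq_or_eq_neg_of_isOrthogonal_of_eq_smul hg
      (apply_self_ne_zero_of_finrank_eigenspace_eq_one hB hM hM_top hsimple hv) hc
  · refine fun h ↦ commute_of_forall_hasEigenvector_exists_eq_smul hM_top fun μ v hv ↦ ?_
    rcases h v hv.2 ⟨μ, hv.apply_eq_smul⟩ with h | h
    · exact ⟨1, by rw [h, one_smul]⟩
    · exact ⟨-1, by rw [h, neg_smul, one_smul]⟩

/-- Let `V` be a finite-dimensional vector space over a field `K` with a nondegenerate
symmetric bilinear form `B`. Let `M` be a self-adjoint endomorphism whose characteristic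
polynomial has `n = dim V` distinct roots in `K`, and let `g` be an orthogonal
endomorphism. Then `g` commutes with `M` if and only if `g` acts as `+1` or `-1` on
every eigenvector of `M`. -/
theorem stmt2 {K V : Type*} [Field K] [DecidableEq K] [AddCommGroup V] [Module K V]
    [FiniteDimensional K V]
    (B : LinearMap.BilinForm K V)
    (hBnondeg : B.Nondegenerate)
    (hBsymm : ∀ x y : V, B x y = B y x)
    (M : V →ₗ[K] V)
    (hMsa : ∀ x y : V, B (M x) y = B x (M y))
    (hMrss : (LinearMap.charpoly M).roots.toFinset.card = Module.finrank K V)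
    (g : V →ₗ[K] V)
    (hgorth : ∀ x y : V, B (g x) (g y) = B x y) :
    g ∘ₗ M = M ∘ₗ g ↔
      ∀ v : V, v ≠ 0 → (∃ μ : K, M v = μ • v) → (g v = v ∨ g v = -v) := by
  exact stmt2_general hBnondeg.1 hMsa
    (iSup_eigenspace_eq_top_of_card_roots_charpoly_eq_finrank hMrss)
    (fun _ ↦ finrank_eigenspace_eq_one_of_card_roots_charpoly_eq_finrank hMrss) hgorth
end

section
/- For every g ∈ O₇(k), the conjugate g⁻¹·A·g does NOT vanish on the whole lower-left 3×3 block; that is, there exist i ∈ {5,6,7} and j ∈ {1,2,3} with (g⁻¹·A·g)ᵢⱼ ≠ 0. -/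
open Matrix

/- The first three columns of `g` span a subspace that is totally isotropic for `P = ⟨·, ·⟩`; if the
block vanished, it would also be isotropic for `Q = ⟨·, A ·⟩`, hence for `P + Q = ⟨·, (A + 1) ·⟩`.
Now `-1` is a simple eigenvalue of `A`, so the radical of `P + Q` is a line, spanned by an
eigenvector `v`, and `⟨v, v⟩ ≠ 0` makes the subspace meet this line trivially. Its image would thus
be a Lagrangian of the nondegenerate 6-dimensional form that `P + Q` induces modulo `v`, forcing
`(-1)³` times the determinant of that form to be a square. But the determinant is `1`, and `-1` is
not a square in `𝔽₃`. -/

section CommRing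

variable {ι R : Type*} [CommRing R]

lemma det_fromBlocks_zero_one_one [Fintype ι] [DecidableEq ι] (D : Matrix ι ι R) :
    (fromBlocks 0 (1 : Matrix ι ι R) 1 D).det = (-1) ^ Fintype.card ι := by
  let M : Matrix (ι ⊕ ι) (ι ⊕ ι) R := fromBlocks 0 1 1 D
  let U : Matrix (ι ⊕ ι) (ι ⊕ ι) R := fromBlocks 1 1 0 1
  have hUM : U * M = fromBlocks 1 (1 + D) 1 D := by simp [U, M, fromBlocks_multiply]
  calc M.det = (U * M).det := by simp [U, det_mul]
    _ = (D - 1 * (1 + D)).det := by rw [hUM, det_fromBlocks_one₁₁]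
    _ = (-1) ^ Fintype.card ι := by simp [det_neg]

lemma mulVec_submatrix_injective {κ μ : Type*} [Fintype ι] [Fintype μ] {M : Matrix κ μ R}
    (hM : Function.Injective M.mulVec) {f : ι → μ} (hf : Function.Injective f) :
    Function.Injective (M.submatrix id f).mulVec :=
  mulVec_injective_iff.2 ((mulVec_injective_iff.1 hM).comp f hf)

lemma transpose_mul_mul_sub_vecMulVec {κ : Type*} [Fintype κ] {S : Matrix κ κ R} {v : κ → R}
    (hS : S.IsSymm) (hv : S *ᵥ v = 0) (X : Matrix κ ι R) (c : ι → R) :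
    (X - vecMulVec v c)ᵀ * S * (X - vecMulVec v c) = Xᵀ * S * X := by
  have hright : S * vecMulVec v c = 0 := by rw [mul_vecMulVec, hv, zero_vecMulVec]
  have hleft : (vecMulVec v c)ᵀ * S = 0 := by
    simpa [transpose_mul, hS.eq] using congrArg transpose hright
  rw [transpose_sub, Matrix.sub_mul, hleft, sub_zero, Matrix.mul_sub,
    Matrix.mul_assoc _ S (vecMulVec v c), hright, Matrix.mul_zero, sub_zero]

lemma transpose_mul_mul_submatrix_succAbove {n : ℕ} {k : Fin (n + 1)}
    {X : Matrix (Fin (n + 1)) ι R} (hX : X k = 0) (S : Matrix (Fin (n + 1)) (Fin (n + 1)) R) :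
    (X.submatrix k.succAbove id)ᵀ * S.submatrix k.succAbove k.succAbove *
      X.submatrix k.succAbove id = Xᵀ * S * X := by
  ext i j
  simp [Matrix.mul_apply, Fin.sum_univ_succAbove _ k, hX]

end CommRing

section Field

variable {ι K : Type*} [Fintype ι] [Field K]

lemma exists_left_inverse_of_mulVec_injective {κ : Type*} [Fintype κ] [DecidableEq ι]
    {X : Matrix κ ι K} (hX : Function.Injective X.mulVec) : ∃ L : Matrix ι κ K, L * X = 1 := by
  classical
  obtain ⟨f, hf⟩ := X.mulVecLin.exists_leftInverse_of_injective (LinearMap.ker_eq_bot.2 hX)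
  refine ⟨LinearMap.toMatrix' f, ?_⟩
  rw [← LinearMap.toMatrix'_id, ← hf, LinearMap.toMatrix'_comp, ← toLin'_apply',
    LinearMap.toMatrix'_toLin']

lemma isSquare_neg_one_pow_mul_det_of_lagrangian {κ : Type*} [Fintype κ] [DecidableEq κ]
    {N : Matrix κ κ K} {X : Matrix κ ι K} (hN : N.IsSymm)
    (hcard : Fintype.card κ = 2 * Fintype.card ι) (hX : Function.Injective X.mulVec)
    (hXN : Xᵀ * N * X = 0) : IsSquare ((-1) ^ Fintype.card ι * N.det) := by
  classical
  obtain hdet | hdet := eq_or_ne N.det 0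
  · simp [hdet]
  obtain ⟨L, hL⟩ := exists_left_inverse_of_mulVec_injective hX
  obtain ⟨e⟩ : Nonempty (κ ≃ ι ⊕ ι) := by
    rw [← Fintype.card_eq, hcard, Fintype.card_sum, two_mul]
  let Y := N⁻¹ * Lᵀ
  have hXY : Xᵀ * N * Y = 1 := by
    rw [Matrix.mul_assoc, mul_nonsing_inv_cancel_left N _ hdet.isUnit, ← transpose_mul, hL,
      transpose_one]
  have hYX : Yᵀ * N * X = 1 := by
    simpa [transpose_mul, hN.eq, Matrix.mul_assoc] using congrArg transpose hXY
  let Z : Matrix κ κ K := (fromCols X Y).submatrix id e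
  have hgram : Zᵀ * N * Z = (fromBlocks 0 1 1 (Yᵀ * N * Y)).submatrix e e := by
    calc Zᵀ * N * Z = ((fromCols X Y)ᵀ * N * fromCols X Y).submatrix e e := rfl
      _ = _ := by
        rw [transpose_fromCols, fromRows_mul, fromRows_mul_fromCols, hXN, hXY, hYX]
  have hZ : Z.det ^ 2 * N.det = (-1) ^ Fintype.card ι := by
    rw [← det_fromBlocks_zero_one_one (Yᵀ * N * Y), ← det_submatrix_equiv_self e, ← hgram, det_mul,
      det_mul, det_transpose]
    ring
  exact ⟨Z.det * N.det, by rw [← hZ]; ring⟩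

variable {n : ℕ} {S : Matrix (Fin (n + 1)) (Fin (n + 1)) K} {v : Fin (n + 1) → K}
  {k : Fin (n + 1)} {X : Matrix (Fin (n + 1)) ι K}

lemma isSquare_neg_one_pow_mul_minor_of_isotropic (hS : S.IsSymm) (hv : S *ᵥ v = 0)
    (hvk : v k ≠ 0) (hcard : n = 2 * Fintype.card ι)
    (hX : ∀ (r : ι → K) (t : K), X *ᵥ r = t • v → r = 0) (hXS : Xᵀ * S * X = 0) :
    IsSquare ((-1) ^ Fintype.card ι * (S.submatrix k.succAbove k.succAbove).det) := by
  -- As `v k ≠ 0`, each class modulo `v` has a unique representative with zero `k`-th coordinate,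
  -- so the minor is the Gram matrix of the form induced by `S` on the quotient by `v`.
  let c : ι → K := (v k)⁻¹ • X k
  let Y := X - vecMulVec v c
  have hYk : Y k = 0 := by
    ext j
    simp [Y, c, vecMulVec_apply, inv_mul_cancel_left₀ hvk]
  refine isSquare_neg_one_pow_mul_det_of_lagrangian (X := Y.submatrix k.succAbove id)
    (hS.submatrix _) (by simpa using hcard) ?_ ?_
  · refine (injective_iff_map_eq_zero (Y.submatrix k.succAbove id).mulVecLin).2 fun r hr => ?_
    have hYr : Y *ᵥ r = 0 := by
      ext i
      obtain rfl | ⟨i, rfl⟩ := k.eq_self_or_eq_succAbove i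
      · simp [mulVec, hYk]
      · exact congrFun hr i
    refine hX r (c ⬝ᵥ r) ?_
    rw [← sub_eq_zero, ← hYr, Matrix.sub_mulVec, vecMulVec_mulVec]
    simp
  · rw [transpose_mul_mul_submatrix_succAbove hYk, transpose_mul_mul_sub_vecMulVec hS hv, hXS]

theorem isSquare_neg_one_pow_mul_minor_of_common_isotropic
    {P : Matrix (Fin (n + 1)) (Fin (n + 1)) K} (hS : S.IsSymm) (hv : S *ᵥ v = 0)
    (hvk : v k ≠ 0) (hvP : v ⬝ᵥ P *ᵥ v ≠ 0) (hcard : n = 2 * Fintype.card ι)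
    (hX : Function.Injective X.mulVec) (hXP : Xᵀ * P * X = 0) (hXS : Xᵀ * S * X = 0) :
    IsSquare ((-1) ^ Fintype.card ι * (S.submatrix k.succAbove k.succAbove).det) := by
  refine isSquare_neg_one_pow_mul_minor_of_isotropic hS hv hvk hcard (fun r t hr => ?_) hXS
  have hiso : (X *ᵥ r) ⬝ᵥ P *ᵥ (X *ᵥ r) = 0 := by
    rw [dotProduct_comm, ← dotProduct_transpose_mulVec, mulVec_mulVec, mulVec_mulVec,
      hXP, zero_mulVec, dotProduct_zero]
  have ht : t = 0 := by simpa [hr, mulVec_smul, hvP] using hiso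
  exact hX (by simp [hr, ht])

end Field

section Orthogonal

variable {g : Matrix (Fin 7) (Fin 7) (ZMod 3)}

lemma Jmat_mul_apply (M : Matrix (Fin 7) (Fin 7) (ZMod 3)) (i j : Fin 7) :
    (Jmat * M) i j = M i.rev j := by
  have hJ : Jmat = (1 : Matrix (Fin 7) (Fin 7) (ZMod 3)).submatrix Fin.rev (Equiv.refl _) := by
    decide
  rw [hJ, one_submatrix_mul]
  rfl

lemma isUnit_det_of_transpose_mul_Jmat_mul (hg : gᵀ * Jmat * g = Jmat) : IsUnit g.det := by
  have hJ : Jmat * Jmat = 1 := by decide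
  exact isUnit_det_of_left_inverse (B := Jmat * (gᵀ * Jmat)) (by rw [Matrix.mul_assoc, hg, hJ])

lemma transpose_mul_Jmat_mul_mul (hg : gᵀ * Jmat * g = Jmat)
    (M : Matrix (Fin 7) (Fin 7) (ZMod 3)) :
    gᵀ * (Jmat * M) * g = Jmat * (g⁻¹ * M * g) := by
  have hdet := isUnit_det_of_transpose_mul_Jmat_mul hg
  calc gᵀ * (Jmat * M) * g = gᵀ * Jmat * g * (g⁻¹ * M * g) := by
        simp only [Matrix.mul_assoc, mul_nonsing_inv_cancel_left g _ hdet]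
    _ = Jmat * (g⁻¹ * M * g) := by rw [hg]

lemma not_isSquare_neg_one_pow_mul_minor_Jmat_mul_A_add_one :
    ¬ IsSquare ((-1) ^ Fintype.card (Fin 3) *
      ((Jmat * (A + 1)).submatrix (Fin.succAbove 1) (Fin.succAbove 1)).det) := by
  have hminor : ((Jmat * (A + 1)).submatrix (Fin.succAbove 1) (Fin.succAbove 1)).det = 1 := by
    decide +kernel
  rw [hminor]
  decide

end Orthogonal

/-- Lemma 2.6: for every `g ∈ O₇(𝔽₃)`, the conjugate `g⁻¹·A·g` does not vanish on the
whole lower-left 3×3 block, i.e. there are `i ∈ {5,6,7}`, `j ∈ {1,2,3}` (1-indexed;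
0-indexed `i ∈ {4,5,6}`, `j ∈ {0,1,2}`) with `(g⁻¹·A·g)ᵢⱼ ≠ 0`. -/
theorem stmt7 (g : Matrix (Fin 7) (Fin 7) (ZMod 3)) (hg : gᵀ * Jmat * g = Jmat) :
    ∃ i ∈ ({4, 5, 6} : Set (Fin 7)), ∃ j ∈ ({0, 1, 2} : Set (Fin 7)),
      (g⁻¹ * A * g) i j ≠ 0 := by
  by_contra! hblock
  let f : Fin 3 → Fin 7 := Fin.castLE (by decide)
  let X : Matrix (Fin 7) (Fin 3) (ZMod 3) := g.submatrix id f
  let v : Fin 7 → ZMod 3 := ![0, 1, -1, 0, 0, 1, -1]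
  have hX : Function.Injective X.mulVec :=
    mulVec_submatrix_injective (mulVec_injective_of_det_ne_zero
      (isUnit_det_of_transpose_mul_Jmat_mul hg).ne_zero) (Fin.castLE_injective _)
  have hXP : Xᵀ * Jmat * X = 0 := by
    calc Xᵀ * Jmat * X = (gᵀ * Jmat * g).submatrix f f := rfl
      _ = 0 := by rw [hg]; decide
  have hXQ : Xᵀ * (Jmat * A) * X = 0 := by
    calc Xᵀ * (Jmat * A) * X = (gᵀ * (Jmat * A) * g).submatrix f f := rfl
      _ = 0 := by
        ext i j
        rw [transpose_mul_Jmat_mul_mul hg, submatrix_apply, Jmat_mul_apply]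
        exact hblock _ (by fin_cases i <;> simp [f]) _ (by fin_cases j <;> simp [f])
  have hXS : Xᵀ * (Jmat * (A + 1)) * X = 0 := by
    rw [Matrix.mul_add, Matrix.mul_one, Matrix.mul_add, Matrix.add_mul, hXQ, hXP, add_zero]
  exact not_isSquare_neg_one_pow_mul_minor_Jmat_mul_A_add_one <|
    isSquare_neg_one_pow_mul_minor_of_common_isotropic (v := v) (hS := by decide)
      (hv := by decide) (hvk := by decide) (hvP := by decide) rfl hX hXP hXS
end

section
/- Let R be a commutative ring and M ∈ M₇(R) a strictly lower triangular matrix (Mᵢⱼ = 0 whenever i ≤ j) with M₂₁ = 0 and M₇₆ = 0. Then M⁵ = 0. If in addition M₄₃ = 0 and M₅₄ = 0, then M⁴ = 0. -/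
open Matrix

/-!
Group the indices into consecutive levels so that the entries of `M` inside each level vanish.
Then `M` raises the level by at least one, so `M ^ k` raises it by at least `k` and must vanish as
soon as there are at most `k` levels. In 1-indexed notation, the zeros at `(2,1)` and `(7,6)`
allow the five levels `{1,2}, {3}, {4}, {5}, {6,7}`; a zero at `(4,3)` or at `(5,4)` allows one more
merger.
-/

/-- The matrix `A` raises levels by at least `d`: for a level function `f` on the indices, an entry
`A i j` can be nonzero only if `f j + d ≤ f i`. In the action on column vectors, `A` then sends the
`j`-th basis vector into the span of those of level at least `f j + d`. -/
def RaisesLevel {n Γ R : Type*} [Add Γ] [LT Γ] [Zero R] (f : n → Γ) (d : Γ) (A : Matrix n n R) :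
    Prop :=
  ∀ i j, f i < f j + d → A i j = 0

namespace RaisesLevel

section OrderedLevels

variable {n Γ R : Type*} [AddCommMonoid Γ] [LinearOrder Γ] [Semiring R] {f : n → Γ}

theorem one [DecidableEq n] : RaisesLevel f 0 (1 : Matrix n n R) := by
  intro i j hij
  have hne : i ≠ j := by
    rintro rfl
    simp at hij
  exact one_apply_ne hne

variable [IsOrderedAddMonoid Γ] [Fintype n]

theorem mul {A B : Matrix n n R} {d e : Γ} (hA : RaisesLevel f d A) (hB : RaisesLevel f e B) :
    RaisesLevel f (d + e) (A * B) := by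
  intro i j hij
  rw [mul_apply]
  refine Finset.sum_eq_zero fun l _ => ?_
  rcases lt_or_ge (f l) (f j + e) with hl | hl
  · rw [hB l j hl, mul_zero]
  · have hil : f i < f l + d := calc
      f i < f j + (d + e) := hij
      _ = f j + e + d := by abel
      _ ≤ f l + d := by gcongr
    rw [hA i l hil, zero_mul]

theorem pow [DecidableEq n] {A : Matrix n n R} {d : Γ} (hA : RaisesLevel f d A) (k : ℕ) :
    RaisesLevel f (k • d) (A ^ k) := by
  induction k with
  | zero => simpa only [zero_nsmul, pow_zero] using one
  | succ k ih => simpa only [succ_nsmul, pow_succ] using ih.mul hA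

end OrderedLevels

theorem eq_zero {n Γ R : Type*} [Add Γ] [Preorder Γ] [CanonicallyOrderedAdd Γ] [Zero R]
    {f : n → Γ} {d : Γ} {A : Matrix n n R} (hA : RaisesLevel f d A) (hf : ∀ i, f i < d) : A = 0 :=
  Matrix.ext fun i j => hA i j ((hf i).trans_le le_add_self)

theorem of_monotone {n R : Type*} [LinearOrder n] [Zero R] {f : n → ℕ} {A : Matrix n n R}
    (hf : Monotone f) (hlow : ∀ i j, i ≤ j → A i j = 0)
    (hlevel : ∀ i j, j < i → f i = f j → A i j = 0) : RaisesLevel f 1 A := by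
  intro i j hij
  rcases le_or_gt i j with hle | hlt
  · exact hlow i j hle
  · exact hlevel i j hlt ((Nat.lt_succ_iff.mp hij).antisymm (hf hlt.le))

end RaisesLevel

theorem pow_eq_zero_of_monotone_level {n R : Type*} [Fintype n] [LinearOrder n] [Semiring R]
    {A : Matrix n n R} {f : n → ℕ} {k : ℕ} (hlow : ∀ i j, i ≤ j → A i j = 0) (hf : Monotone f)
    (hlevel : ∀ i j, j < i → f i = f j → A i j = 0) (hk : ∀ i, f i < k) : A ^ k = 0 := by
  have hpow : RaisesLevel f k (A ^ k) := by
    simpa using (RaisesLevel.of_monotone hf hlow hlevel).pow k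
  exact hpow.eq_zero hk

theorem stmt13_general {R : Type*} [Semiring R] (M : Matrix (Fin 7) (Fin 7) R)
    (hlow : ∀ i j : Fin 7, i ≤ j → M i j = 0)
    (h21 : M 1 0 = 0) (h76 : M 6 5 = 0) :
    M ^ 5 = 0 ∧ ((M 3 2 = 0 ∨ M 4 3 = 0) → M ^ 4 = 0) := by
  refine ⟨?_, ?_⟩
  · refine pow_eq_zero_of_monotone_level (f := ![0, 0, 1, 2, 3, 4, 4]) hlow (by decide) ?_
      (by decide)
    simp [Fin.forall_fin_succ, h21, h76]
  · rintro (h43 | h54)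
    · refine pow_eq_zero_of_monotone_level (f := ![0, 0, 1, 1, 2, 3, 3]) hlow (by decide) ?_
        (by decide)
      simp [Fin.forall_fin_succ, h21, h43, h76]
    · refine pow_eq_zero_of_monotone_level (f := ![0, 0, 1, 2, 2, 3, 3]) hlow (by decide) ?_
        (by decide)
      simp [Fin.forall_fin_succ, h21, h54, h76]

/-- Shape analysis from the proof of Proposition 3.1: if `M ∈ M₇(R)` is strictly lower
triangular (`Mᵢⱼ = 0` for `i ≤ j`) with vanishing `(2,1)` and `(7,6)` entries
(1-indexed; 0-indexed `(1,0)` and `(6,5)`), then `M⁵ = 0`; if moreover the `(4,3)` and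
`(5,4)` entries (0-indexed `(3,2)` and `(4,3)`) vanish, then `M⁴ = 0`. -/
theorem stmt13 {R : Type*} [CommRing R] (M : Matrix (Fin 7) (Fin 7) R)
    (hlow : ∀ i j : Fin 7, i ≤ j → M i j = 0)
    (h21 : M 1 0 = 0) (h76 : M 6 5 = 0) :
    M ^ 5 = 0 ∧ ((M 3 2 = 0 ∧ M 4 3 = 0) → M ^ 4 = 0) :=
  (stmt13_general M hlow h21 h76).imp_right fun hpow ⟨h43, _⟩ => hpow (Or.inl h43)
end
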